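/- arXiv:2605.07664 — 2 statements merged into one kernel-verified Lean document; each statement's English description precedes it below -/
import Mathlib

section
/- For every series-reduced finite tree T with |T| > 2 and every internal (non-leaf) vertex v of T, the value p(T,v) lies in the interval [2/3,1]; moreover, the set of values {p(T,v) : T a series-reduced finite tree with |T| > 2, v an internal vertex of T} is dense in [2/3,1]. -/
/-- A subtree of a graph: a nonempty set of vertices inducing a connected subgraph. -/
def IsSubtree {V : Type*} (G : SimpleGraph V) (S : Finset V) : Prop :=
  S.Nonempty ∧ (G.induce (S : Set V)).Connected

/-- `N(T)`: the number of subtrees. -/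
noncomputable def numSubtrees {V : Type*} [Fintype V] (G : SimpleGraph V) : ℕ :=
  Nat.card {S : Finset V // IsSubtree G S}

/-- `N(T,v)`: the number of subtrees containing the vertex `v`. -/
noncomputable def numSubtreesContaining {V : Type*} [Fintype V] (G : SimpleGraph V) (v : V) : ℕ :=
  Nat.card {S : Finset V // IsSubtree G S ∧ v ∈ S}

/-- `p(T,v) = N(T,v)/N(T)`: the probability that a uniformly random subtree contains `v`. -/
noncomputable def subtreeProb {V : Type*} [Fintype V] (G : SimpleGraph V) (v : V) : ℝ :=
  (numSubtreesContaining G v : ℝ) / (numSubtrees G : ℝ)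

/-- A graph is series-reduced if no vertex has degree 2. -/
def SeriesReduced {V : Type*} (G : SimpleGraph V) : Prop :=
  ∀ v : V, Nat.card (G.neighborSet v) ≠ 2


open Finset Filter Topology

/-- `par` assigns to every vertex its parent, `v` is the only vertex without one, and the depth
function `d` increases strictly from parent to child. -/
structure IsParentMap {V : Type*} (par : V → Option V) (v : V) (d : V → ℕ) : Prop where
  eq_none_iff : ∀ x, par x = none ↔ x = v
  lt : ∀ {x y}, par x = some y → d y < d x

/-- The edges of `G` are the pairs consisting of a vertex and its parent. -/
def HasParentMap {V : Type*} (G : SimpleGraph V) (par : V → Option V) : Prop :=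
  ∀ x y, G.Adj x y ↔ par x = some y ∨ par y = some x

/-- `S` contains `t`, and the parent of every other element of `S`. -/
def IsRootedAt {V : Type*} (par : V → Option V) (t : V) (S : Finset V) : Prop :=
  t ∈ S ∧ ∀ s ∈ S, s ≠ t → ∃ p ∈ S, par s = some p

open Classical in
/-- The children of `t`. -/
noncomputable def children {V : Type*} [Fintype V] (par : V → Option V) (t : V) : Finset V :=
  {c | par c = some t}

open Classical in
/-- The subtrees whose topmost vertex is `t`. -/
noncomputable def rootedSets {V : Type*} [Fintype V] (par : V → Option V) (t : V) :
    Finset (Finset V) :=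
  {S | IsRootedAt par t S}

/-- The number of subtrees whose topmost vertex is `t`. -/
noncomputable def rootedCount {V : Type*} [Fintype V] (par : V → Option V) (t : V) : ℕ :=
  #(rootedSets par t)

/-- `x` is a descendant of `s`, or `s` itself. -/
def IsDescendant {V : Type*} (par : V → Option V) (s x : V) : Prop :=
  Relation.ReflTransGen (fun a b => par a = some b) x s

section

variable {V : Type*} {par : V → Option V} {v : V} {d : V → ℕ}

@[simp]
lemma mem_children [Fintype V] {t c : V} : c ∈ children par t ↔ par c = some t := by
  simp [children]

@[simp]
lemma mem_rootedSets [Fintype V] {t : V} {S : Finset V} :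
    S ∈ rootedSets par t ↔ IsRootedAt par t S := by
  simp [rootedSets]

lemma IsDescendant.eq_or_lt (h : IsParentMap par v d) {s x : V} (hx : IsDescendant par s x) :
    x = s ∨ d s < d x := by
  induction hx with
  | refl => exact Or.inl rfl
  | tail _ hbc ih =>
    have := h.lt hbc
    rcases ih with rfl | ih <;> omega

lemma IsDescendant.le (h : IsParentMap par v d) {s x : V} (hx : IsDescendant par s x) :
    d s ≤ d x := by
  rcases hx.eq_or_lt h with rfl | hx <;> omega

/-- The ancestors of a vertex form a chain. -/
lemma IsDescendant.of_common {s t x : V} (hs : IsDescendant par s x) (ht : IsDescendant par t x) :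
    IsDescendant par s t ∨ IsDescendant par t s :=
  (Relation.ReflTransGen.total_of_right_unique
    (fun _ _ _ hab hac => Option.some.inj (hab.symm.trans hac)) hs ht).symm

lemma IsRootedAt.isDescendant (h : IsParentMap par v d) {t : V} {S : Finset V}
    (hS : IsRootedAt par t S) : ∀ s ∈ S, IsDescendant par t s := by
  suffices ∀ n, ∀ s ∈ S, d s = n → IsDescendant par t s from fun s hs => this _ s hs rfl
  intro n
  induction n using Nat.strong_induction_on with
  | _ n ih =>
    intro s hs hn
    by_cases hst : s = t
    · subst hst; exact Relation.ReflTransGen.refl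
    obtain ⟨p, hp, hsp⟩ := hS.2 s hs hst
    exact Relation.ReflTransGen.head hsp (ih _ (hn ▸ h.lt hsp) p hp rfl)

lemma IsRootedAt.unique (h : IsParentMap par v d) {s t : V} {S : Finset V}
    (hs : IsRootedAt par s S) (ht : IsRootedAt par t S) : s = t := by
  have h₁ := (ht.isDescendant h s hs.1).eq_or_lt h
  have h₂ := (hs.isDescendant h t ht.1).eq_or_lt h
  rcases h₁ with h₁ | h₁
  · exact h₁
  · rcases h₂ with h₂ | h₂
    · exact h₂.symm
    · omega

lemma IsRootedAt.isSubtree (h : IsParentMap par v d) {G : SimpleGraph V}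
    (hG : HasParentMap G par) {t : V} {S : Finset V} (hS : IsRootedAt par t S) :
    IsSubtree G S := by
  refine ⟨⟨t, hS.1⟩, ?_⟩
  have key : ∀ n, ∀ s : (S : Set V), d s = n →
      (G.induce (S : Set V)).Reachable s ⟨t, hS.1⟩ := by
    intro n
    induction n using Nat.strong_induction_on with
    | _ n ih =>
      rintro ⟨s, hs⟩ hn
      by_cases hst : s = t
      · subst hst; exact SimpleGraph.Reachable.refl _
      obtain ⟨p, hp, hsp⟩ := hS.2 s hs hst
      have hadj : (G.induce (S : Set V)).Adj ⟨s, hs⟩ ⟨p, hp⟩ := (hG s p).2 (Or.inl hsp)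
      exact hadj.reachable.trans (ih (d p) (hn ▸ h.lt hsp) ⟨p, hp⟩ rfl)
  have : Nonempty (S : Set V) := ⟨⟨t, hS.1⟩⟩
  exact ⟨fun x y => (key _ x rfl).trans (key _ y rfl).symm⟩

lemma isSubtree_iff (h : IsParentMap par v d) {G : SimpleGraph V} (hG : HasParentMap G par)
    {S : Finset V} : IsSubtree G S ↔ ∃ t, IsRootedAt par t S := by
  refine ⟨fun hS => ?_, fun ⟨t, ht⟩ => ht.isSubtree h hG⟩
  obtain ⟨t, htS, hmin⟩ := S.exists_min_image d hS.1
  refine ⟨t, htS, fun s hs hst => ?_⟩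
  by_contra hcon
  push Not at hcon
  have key : ∀ y : (S : Set V), IsDescendant par s y := by
    intro y
    have hr := hS.2.preconnected ⟨s, hs⟩ y
    rw [SimpleGraph.reachable_iff_reflTransGen] at hr
    induction hr with
    | refl => exact Relation.ReflTransGen.refl
    | @tail a b _ hab ih =>
      rcases (hG _ _).1 hab with hab | hab
      · rcases Relation.ReflTransGen.cases_head ih with heq | ⟨c, hac, hc⟩
        · exact absurd (heq ▸ hab) (hcon b b.2)
        · have hcb : c = b := Option.some.inj (hac.symm.trans hab)
          exact hcb ▸ hc
      · exact Relation.ReflTransGen.head hab ih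
  rcases (key ⟨t, htS⟩).eq_or_lt h with heq | hlt
  · exact hst heq.symm
  · exact absurd (hmin s hs) (not_le.2 hlt)

lemma numSubtrees_eq [Fintype V] (h : IsParentMap par v d) {G : SimpleGraph V}
    (hG : HasParentMap G par) : numSubtrees G = ∑ t, rootedCount par t := by
  classical
  unfold numSubtrees rootedCount
  rw [← card_biUnion, Nat.subtype_card]
  · simp [isSubtree_iff h hG]
  · intro s _ t _ hst
    rw [Function.onFun, disjoint_left]
    intro S hs ht
    exact hst ((mem_rootedSets.1 hs).unique h (mem_rootedSets.1 ht))

lemma numSubtreesContaining_eq [Fintype V] (h : IsParentMap par v d) {G : SimpleGraph V}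
    (hG : HasParentMap G par) : numSubtreesContaining G v = rootedCount par v := by
  unfold numSubtreesContaining rootedCount
  rw [Nat.subtype_card]
  intro S
  rw [mem_rootedSets, isSubtree_iff h hG]
  refine ⟨fun hS => ⟨⟨v, hS⟩, hS.1⟩, ?_⟩
  rintro ⟨⟨t, ht⟩, hv⟩
  by_cases hvt : v = t
  · exact hvt ▸ ht
  obtain ⟨p, _, hp⟩ := ht.2 v hv hvt
  simp [(h.eq_none_iff v).2 rfl] at hp

lemma IsRootedAt.descendants (h : IsParentMap par v d) {t c : V} {S : Finset V}
    [DecidablePred (IsDescendant par c)]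
    (hS : IsRootedAt par t S) (hc : par c = some t) :
    S.filter (IsDescendant par c) = ∅ ∨ IsRootedAt par c (S.filter (IsDescendant par c)) := by
  have hct := h.lt hc
  have step : ∀ s ∈ S, IsDescendant par c s → s ≠ c →
      ∃ p ∈ S, par s = some p ∧ IsDescendant par c p := by
    intro s hs hcs hsc
    have hst : s ≠ t := by
      rintro rfl
      have := hcs.le h
      omega
    obtain ⟨p, hp, hsp⟩ := hS.2 s hs hst
    refine ⟨p, hp, hsp, ?_⟩
    rcases Relation.ReflTransGen.cases_head hcs with heq | ⟨q, hsq, hq⟩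
    · exact absurd heq hsc
    · exact Option.some.inj (hsq.symm.trans hsp) ▸ hq
  rcases (S.filter (IsDescendant par c)).eq_empty_or_nonempty with he | hne
  · exact Or.inl he
  right
  obtain ⟨m, hm, hmin⟩ := exists_min_image _ d hne
  rw [mem_filter] at hm
  have hmc : m = c := by
    by_contra hmc
    obtain ⟨p, hp, hmp, hcp⟩ := step m hm.1 hm.2 hmc
    exact absurd (hmin p (mem_filter.2 ⟨hp, hcp⟩)) (not_le.2 (h.lt hmp))
  subst hmc
  refine ⟨mem_filter.2 hm, fun s hs hsm => ?_⟩
  rw [mem_filter] at hs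
  obtain ⟨p, hp, hsp, hcp⟩ := step s hs.1 hs.2 hsm
  exact ⟨p, mem_filter.2 ⟨hp, hcp⟩, hsp⟩

lemma rootedCount_eq_prod [Fintype V] (h : IsParentMap par v d) (t : V) :
    rootedCount par t = ∏ c ∈ children par t, (1 + rootedCount par c) := by
  classical
  let F : V → Finset (Finset V) := fun c =>
    if par c = some t then insert ∅ (rootedSets par c) else {∅}
  have hF : ∏ c ∈ children par t, (1 + rootedCount par c) = #(Fintype.piFinset F) := by
    rw [Fintype.card_piFinset, children, prod_filter]
    refine prod_congr rfl fun c _ => ?_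
    by_cases hc : par c = some t
    · have : ∅ ∉ rootedSets par c := by simp [IsRootedAt]
      simp [F, hc, this, rootedCount, add_comm]
    · simp [F, hc]
  rw [hF, rootedCount]
  have hmem : ∀ {f : V → Finset V}, f ∈ Fintype.piFinset F → ∀ {c s}, s ∈ f c →
      par c = some t ∧ IsRootedAt par c (f c) := by
    intro f hf c s hs
    have := Fintype.mem_piFinset.1 hf c
    by_cases hc : par c = some t
    · simp only [F, hc, if_true, mem_insert, mem_rootedSets] at this
      rcases this with he | hr
      · simp [he] at hs
      · exact ⟨hc, hr⟩
    · simp only [F, hc, if_false, mem_singleton] at this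
      simp [this] at hs
  refine card_nbij'
    (fun S c => if par c = some t then S.filter (IsDescendant par c) else ∅)
    (fun f => insert t (univ.biUnion f)) ?_ ?_ ?_ ?_
  · intro S hS
    rw [mem_coe, mem_rootedSets] at hS
    rw [mem_coe, Fintype.mem_piFinset]
    intro c
    by_cases hc : par c = some t
    · simpa [F, hc] using hS.descendants h hc
    · simp [F, hc]
  · intro f hf
    rw [mem_coe] at hf
    rw [mem_coe, mem_rootedSets]
    refine ⟨mem_insert_self _ _, fun s hs hst => ?_⟩
    rw [mem_insert] at hs
    obtain ⟨c, -, hsc⟩ := mem_biUnion.1 (hs.resolve_left hst)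
    obtain ⟨hc, hr⟩ := hmem hf hsc
    by_cases hs' : s = c
    · exact ⟨t, mem_insert_self _ _, hs' ▸ hc⟩
    · obtain ⟨p, hp, hsp⟩ := hr.2 s hsc hs'
      exact ⟨p, mem_insert_of_mem (mem_biUnion.2 ⟨c, mem_univ _, hp⟩), hsp⟩
  · intro S hS
    rw [mem_coe, mem_rootedSets] at hS
    ext s
    simp only [mem_insert, mem_biUnion, mem_univ, true_and]
    constructor
    · rintro (rfl | ⟨c, hc⟩)
      · exact hS.1
      · split_ifs at hc
        · exact (mem_filter.1 hc).1
        · simp at hc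
    · intro hs
      rcases Relation.ReflTransGen.cases_tail (hS.isDescendant h s hs) with heq | ⟨c, hsc, hc⟩
      · exact Or.inl heq.symm
      · right
        refine ⟨c, ?_⟩
        rw [if_pos hc, mem_filter]
        exact ⟨hs, hsc⟩
  · intro f hf
    rw [mem_coe] at hf
    funext c
    ext s
    simp only
    by_cases hc : par c = some t
    · rw [if_pos hc, mem_filter, mem_insert, mem_biUnion]
      constructor
      · rintro ⟨rfl | ⟨c', -, hs⟩, hcs⟩
        · have := h.lt hc
          have := hcs.le h
          omega
        · obtain ⟨hc', hr⟩ := hmem hf hs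
          have hdesc := hr.isDescendant h s hs
          suffices c = c' from this ▸ hs
          have aux : ∀ {a b : V}, par a = some t → par b = some t → IsDescendant par a b →
              a = b := by
            intro a b ha hb hab
            rcases Relation.ReflTransGen.cases_head hab with heq | ⟨q, hq, hqa⟩
            · exact heq.symm
            · have hqt : q = t := Option.some.inj (hq.symm.trans hb)
              have := (hqt ▸ hqa : IsDescendant par a t).le h
              have := h.lt ha
              omega
          rcases hcs.of_common hdesc with hcc | hcc
          · exact aux hc hc' hcc
          · exact (aux hc' hc hcc).symm
      · intro hs
        exact ⟨Or.inr ⟨c, mem_univ _, hs⟩, (hmem hf hs).2.isDescendant h s hs⟩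
    · rw [if_neg hc]
      refine ⟨fun hs => by simp at hs, fun hs => absurd (hmem hf hs).1 hc⟩

lemma rootedCount_pos [Fintype V] (t : V) : 0 < rootedCount par t :=
  card_pos.2 ⟨{t}, mem_rootedSets.2 ⟨mem_singleton_self t, fun _ hs hst =>
    absurd (mem_singleton.1 hs) hst⟩⟩

/-- A map of vertices that preserves children on a downward closed set preserves counts there. -/
lemma rootedCount_map [Fintype V] {W : Type*} [Fintype W] {par' : W → Option W} {v' : W}
    {d' : W → ℕ} (h : IsParentMap par v d) (h' : IsParentMap par' v' d') (φ : V ↪ W)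
    (P : V → Prop) (hP : ∀ x c, P x → par c = some x → P c)
    (hφ : ∀ x, P x → children par' (φ x) = (children par x).map φ) (x : V) (hx : P x) :
    rootedCount par' (φ x) = rootedCount par x := by
  have wf : WellFounded (fun a b : V => d b < d a) :=
    @Finite.wellFounded_of_trans_of_irrefl _ _ _ ⟨fun _ _ _ hab hbc => hbc.trans hab⟩
      ⟨fun _ => lt_irrefl _⟩
  induction x using wf.induction with
  | _ x ih =>
    rw [rootedCount_eq_prod h, rootedCount_eq_prod h', hφ x hx, prod_map]
    refine prod_congr rfl fun c hc => ?_
    rw [mem_children] at hc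
    rw [ih c (h.lt hc) (hP x c hx hc)]

end

section

variable {V : Type*} {par : V → Option V} {v : V} {d : V → ℕ} {G : SimpleGraph V}

/-- In a tree, a vertex has at most one neighbour closer to `v`. -/
lemma SimpleGraph.IsTree.eq_of_adj_of_dist_lt (hG : G.IsTree) {v x y z : V} (hy : G.Adj x y)
    (hz : G.Adj x z) (hyd : G.dist y v < G.dist x v) (hzd : G.dist z v < G.dist x v) : y = z := by
  have key : ∀ {w : V} (hw : G.Adj x w), G.dist w v < G.dist x v →
      ∃ q : G.Walk w v, (SimpleGraph.Walk.cons hw q).IsPath := by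
    intro w hw hwd
    obtain ⟨q, hq⟩ := hG.connected.exists_walk_length_eq_dist w v
    refine ⟨q, SimpleGraph.Walk.isPath_of_length_eq_dist _ ?_⟩
    have := SimpleGraph.dist_le (SimpleGraph.Walk.cons hw q)
    rw [SimpleGraph.Walk.length_cons] at this ⊢
    omega
  obtain ⟨q, hq⟩ := key hy hyd
  obtain ⟨r, hr⟩ := key hz hzd
  have := congrArg SimpleGraph.Walk.snd ((hG.existsUnique_path x v).unique hq hr)
  simpa using this

lemma SimpleGraph.IsTree.exists_isParentMap (hG : G.IsTree) (v : V) :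
    ∃ par : V → Option V, IsParentMap par v (fun x => G.dist x v) ∧ HasParentMap G par := by
  classical
  let Q : V → V → Prop := fun x y => G.Adj x y ∧ G.dist y v < G.dist x v
  let par : V → Option V := fun x => if h : ∃ y, Q x y then some h.choose else none
  have hpar : ∀ {x y}, par x = some y ↔ Q x y := by
    intro x y
    constructor
    · intro hxy
      simp only [par] at hxy
      split_ifs at hxy with hex
      exact Option.some.inj hxy ▸ hex.choose_spec
    · intro hxy
      have hex : ∃ y, Q x y := ⟨y, hxy⟩
      simp only [par, dif_pos hex, Option.some.injEq]
      exact hG.eq_of_adj_of_dist_lt hex.choose_spec.1 hxy.1 hex.choose_spec.2 hxy.2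
  refine ⟨par, ⟨fun x => ⟨fun hx => ?_, ?_⟩, fun hxy => (hpar.1 hxy).2⟩, fun x y => ⟨?_, ?_⟩⟩
  · by_contra hxv
    obtain ⟨q, hq⟩ := hG.connected.exists_walk_length_eq_dist x v
    cases q with
    | nil => exact hxv rfl
    | @cons _ y _ hadj q =>
      have := SimpleGraph.dist_le q
      rw [SimpleGraph.Walk.length_cons] at hq
      have := hpar.2 (⟨hadj, by omega⟩ : Q x y)
      simp [hx] at this
  · rintro rfl
    rw [Option.eq_none_iff_forall_ne_some]
    intro y hy
    simpa using (hpar.1 hy).2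
  · intro hxy
    have := hG.dist_eq_dist_add_one_of_adj v hxy
    rw [SimpleGraph.dist_comm (u := v), SimpleGraph.dist_comm (u := v)] at this
    rcases this with h | h
    · exact Or.inl (hpar.2 ⟨hxy, by omega⟩)
    · exact Or.inr (hpar.2 ⟨hxy.symm, by omega⟩)
  · rintro (h | h)
    · exact (hpar.1 h).1
    · exact (hpar.1 h).1.symm

/-- The graph joining every vertex to its parent. -/
def parentGraph (par : V → Option V) : SimpleGraph V :=
  SimpleGraph.fromRel fun x y => par x = some y

lemma IsParentMap.hasParentMap (h : IsParentMap par v d) :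
    HasParentMap (parentGraph par) par := by
  intro x y
  rw [parentGraph, SimpleGraph.fromRel_adj]
  refine ⟨And.right, fun hxy => ⟨?_, hxy⟩⟩
  rintro rfl
  rcases hxy with hxy | hxy <;> exact (h.lt hxy).false

lemma IsParentMap.isTree [Finite V] (h : IsParentMap par v d) (hG : HasParentMap G par) :
    G.IsTree := by
  have := Fintype.ofFinite V
  rw [SimpleGraph.isTree_iff_connected_and_card]
  constructor
  · have hroot : IsRootedAt par v univ := by
      refine ⟨mem_univ _, fun s _ hs => ?_⟩
      obtain ⟨p, hp⟩ := Option.ne_none_iff_exists'.1 (mt (h.eq_none_iff s).1 hs)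
      exact ⟨p, mem_univ _, hp⟩
    have hconn := (hroot.isSubtree h hG).2
    rw [coe_univ] at hconn
    exact (SimpleGraph.induceUnivIso G).connected_iff.1 hconn
  · have hex : ∀ x : {x : V // x ≠ v}, ∃ p, par x = some p := fun x =>
      Option.ne_none_iff_exists'.1 (mt (h.eq_none_iff x).1 x.2)
    choose p hp using hex
    let f : {x : V // x ≠ v} → G.edgeSet := fun x =>
      ⟨s(x.1, p x), (hG _ _).2 (Or.inl (hp x))⟩
    have hf : Function.Bijective f := by
      constructor
      · intro x y hxy
        have hxy' : s(x.1, p x) = s(y.1, p y) := congrArg Subtype.val hxy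
        rw [Sym2.eq_iff] at hxy'
        rcases hxy' with hxy' | hxy'
        · exact Subtype.ext hxy'.1
        · have h₁ := h.lt (hp x)
          have h₂ := h.lt (hp y)
          rw [hxy'.2, hxy'.1] at h₁
          omega
      · rintro ⟨e, he⟩
        induction e using Sym2.ind with
        | _ a b =>
          have hne : ∀ {a b : V}, par a = some b → a ≠ v := by
            rintro a b hab rfl
            simp [(h.eq_none_iff a).2 rfl] at hab
          rcases (hG a b).1 he with hab | hab
          · refine ⟨⟨a, hne hab⟩, Subtype.ext ?_⟩
            have : p ⟨a, hne hab⟩ = b := Option.some.inj ((hp ⟨a, hne hab⟩).symm.trans hab)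
            simp [f, this]
          · refine ⟨⟨b, hne hab⟩, Subtype.ext ?_⟩
            have : p ⟨b, hne hab⟩ = a := Option.some.inj ((hp ⟨b, hne hab⟩).symm.trans hab)
            simp [f, this, Sym2.eq_swap]
    classical
    rw [← Nat.card_congr (Equiv.ofBijective f hf), ← Nat.card_congr (Equiv.optionSubtypeNe v),
      Finite.card_option]

lemma card_neighborSet_root [Fintype V] (h : IsParentMap par v d) (hG : HasParentMap G par) :
    Nat.card (G.neighborSet v) = #(children par v) := by
  refine Nat.subtype_card _ fun x => ?_
  simp [hG v x, (h.eq_none_iff v).2 rfl]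

lemma card_neighborSet_of_ne [Fintype V] (h : IsParentMap par v d) (hG : HasParentMap G par)
    {x : V} (hx : x ≠ v) : Nat.card (G.neighborSet x) = #(children par x) + 1 := by
  classical
  obtain ⟨p, hp⟩ := Option.ne_none_iff_exists'.1 (mt (h.eq_none_iff x).1 hx)
  have hpx : p ∉ children par x := by
    rw [mem_children]
    intro hpx
    exact (h.lt hp).not_gt (h.lt hpx)
  rw [← card_insert_of_notMem hpx]
  refine Nat.subtype_card _ fun y => ?_
  rw [mem_insert, mem_children, SimpleGraph.mem_neighborSet, hG x y, hp, Option.some.injEq, eq_comm]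

end

lemma two_pow_mul_le_two_mul_prod {ι : Type*} (s : Finset ι) (u : ι → ℝ) (hu : ∀ i, 0 ≤ u i) :
    2 ^ #s * (2 + ∑ i ∈ s, u i) ≤ 2 * ∏ i ∈ s, (2 + u i) := by
  classical
  induction s using Finset.induction_on with
  | empty => simp
  | insert i s hi ih =>
    rw [sum_insert hi, prod_insert hi, card_insert_of_notMem hi]
    have hs : 0 ≤ ∑ i ∈ s, u i := sum_nonneg fun i _ => hu i
    have hp : (0 : ℝ) < 2 ^ #s := by positivity
    calc (2 : ℝ) ^ (#s + 1) * (2 + (u i + ∑ i ∈ s, u i))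
        ≤ (2 + u i) * (2 ^ #s * (2 + ∑ i ∈ s, u i)) := by
          have := mul_nonneg hp.le (mul_nonneg (hu i) hs)
          rw [pow_succ]
          linarith
      _ ≤ (2 + u i) * (2 * ∏ i ∈ s, (2 + u i)) := by
          gcongr
          linarith [hu i]
      _ = _ := by ring

lemma four_mul_card_add_le_two_mul_prod {ι : Type*} (s : Finset ι) {k : ℕ} (hk : k ≤ #s)
    (f : ι → ℝ) (hf : ∀ i, 1 ≤ f i) :
    4 * #s + 2 ^ k * ∑ i ∈ s, (f i - 1) ≤ 2 * ∏ i ∈ s, (1 + f i) := by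
  have key := two_pow_mul_le_two_mul_prod s (fun i => f i - 1) fun i => by linarith [hf i]
  have hU : 0 ≤ ∑ i ∈ s, (f i - 1) := sum_nonneg fun i _ => by linarith [hf i]
  have h₁ : (2 : ℝ) ^ k ≤ 2 ^ #s := pow_le_pow_right₀ (by norm_num) hk
  have h₂ : 2 * (#s : ℝ) ≤ 2 ^ #s := by
    rcases Nat.eq_zero_or_eq_succ_pred (#s) with h0 | hs
    · simp [h0]
    · have hlt : ((#s).pred : ℝ) + 1 ≤ 2 ^ (#s).pred := by
        exact_mod_cast Nat.lt_two_pow_self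
      rw [hs, pow_succ]
      push_cast
      linarith
  have e : ∏ i ∈ s, (2 + (f i - 1)) = ∏ i ∈ s, (1 + f i) := prod_congr rfl fun i _ => by ring
  rw [e] at key
  have := mul_le_mul_of_nonneg_right h₁ hU
  linarith

lemma sum_two_mul_sub_one {ι : Type*} (s : Finset ι) (f : ι → ℝ) :
    ∑ i ∈ s, (2 * f i - 1) = 2 * ∑ i ∈ s, (f i - 1) + #s := by
  rw [mul_sum, ← nsmul_one, ← sum_const, ← sum_add_distrib]
  exact sum_congr rfl fun i _ => by ring

lemma one_add_sum_le_prod {ι : Type*} (s : Finset ι) (hs : #s ≠ 1) (f : ι → ℝ)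
    (hf : ∀ i, 1 ≤ f i) : 1 + ∑ i ∈ s, (2 * f i - 1) ≤ ∏ i ∈ s, (1 + f i) := by
  rcases Nat.lt_or_ge (#s) 2 with hlt | hge
  · have : s = ∅ := card_eq_zero.1 (by omega)
    simp [this]
  have key := four_mul_card_add_le_two_mul_prod s hge f hf
  have hk : (2 : ℝ) ≤ #s := by exact_mod_cast hge
  rw [sum_two_mul_sub_one]
  linarith

lemma two_mul_sum_le_prod {ι : Type*} (s : Finset ι) (hs : 3 ≤ #s) (f : ι → ℝ)
    (hf : ∀ i, 1 ≤ f i) : 2 * ∑ i ∈ s, (2 * f i - 1) ≤ ∏ i ∈ s, (1 + f i) := by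
  have key := four_mul_card_add_le_two_mul_prod s hs f hf
  rw [sum_two_mul_sub_one]
  linarith

lemma sum_children {V : Type*} [Fintype V] [DecidableEq V] {par : V → Option V} {v : V}
    {d : V → ℕ} (h : IsParentMap par v d) (g : V → ℝ) :
    ∑ w, ∑ c ∈ children par w, g c = ∑ c ∈ univ.erase v, g c := by
  rw [← sum_biUnion]
  · congr 1
    ext c
    have := Option.ne_none_iff_exists' (o := par c)
    rw [Ne, h.eq_none_iff] at this
    simp [this]
  · intro x _ y _ hxy
    rw [Function.onFun, disjoint_left]
    intro c hx hy
    rw [mem_children] at hx hy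
    exact hxy (Option.some.inj (hx.symm.trans hy))

/-- If the root has at least three children and no other vertex has exactly one child, then at
most a third of all subtrees avoid the root. -/
lemma three_mul_rootedCount_ge {V : Type*} [Fintype V] {par : V → Option V} {v : V} {d : V → ℕ}
    (h : IsParentMap par v d) (hv : 3 ≤ #(children par v))
    (hne : ∀ w, w ≠ v → #(children par w) ≠ 1) :
    2 * ∑ w, (rootedCount par w : ℝ) ≤ 3 * rootedCount par v := by
  classical
  set a : V → ℝ := fun w => rootedCount par w with ha
  have ha1 : ∀ w, 1 ≤ a w := fun w => by
    have := rootedCount_pos (par := par) w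
    simp only [ha]
    exact_mod_cast this
  have hprod : ∀ w, a w = ∏ c ∈ children par w, (1 + a c) := fun w => by
    simp only [ha]
    rw [rootedCount_eq_prod h w]
    push_cast
    rfl
  have hroot := two_mul_sum_le_prod (children par v) hv a ha1
  rw [← hprod] at hroot
  have hother : ∑ w ∈ univ.erase v, (1 + ∑ c ∈ children par w, (2 * a c - 1)) ≤
      ∑ w ∈ univ.erase v, a w := by
    refine sum_le_sum fun w hw => ?_
    rw [hprod w]
    exact one_add_sum_le_prod _ (hne w (ne_of_mem_erase hw)) a ha1
  have hswap := sum_children h fun c => 2 * a c - 1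
  have hsplit : ∑ c ∈ univ.erase v, (2 * a c - 1) =
      2 * ∑ c ∈ univ.erase v, a c - ∑ c ∈ univ.erase v, 1 := by
    rw [sum_sub_distrib, ← mul_sum]
  rw [← add_sum_erase _ _ (mem_univ v)] at hswap
  rw [sum_add_distrib] at hother
  change 2 * ∑ w, a w ≤ 3 * a v
  rw [← add_sum_erase _ _ (mem_univ v)]
  linarith

lemma SimpleGraph.IsTree.subtreeProb_mem_Icc {n : ℕ} {G : SimpleGraph (Fin n)} {v : Fin n}
    (hG : G.IsTree) (hred : SeriesReduced G) (hn : 2 < n) (hv : Nat.card (G.neighborSet v) ≠ 1) :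
    subtreeProb G v ∈ Set.Icc (2 / 3 : ℝ) 1 := by
  classical
  obtain ⟨par, h, hpar⟩ := hG.exists_isParentMap v
  have : Nontrivial (Fin n) := Fin.nontrivial_iff_two_le.2 hn.le
  have hpos : 0 < Nat.card (G.neighborSet v) := by
    rw [Nat.card_eq_fintype_card, SimpleGraph.card_neighborSet_eq_degree]
    exact hG.connected.preconnected.degree_pos_of_nontrivial v
  have h2 := hred v
  rw [card_neighborSet_root h hpar] at hv h2 hpos
  have key := three_mul_rootedCount_ge h (by omega) fun w hw hw1 =>
    hred w (by rw [card_neighborSet_of_ne h hpar hw, hw1])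
  have hle : (rootedCount par v : ℝ) ≤ ∑ w, (rootedCount par w : ℝ) :=
    single_le_sum (f := fun w => (rootedCount par w : ℝ)) (fun w _ => Nat.cast_nonneg _)
      (mem_univ v)
  have hp : (0 : ℝ) < rootedCount par v := by exact_mod_cast rootedCount_pos v
  rw [subtreeProb, numSubtreesContaining_eq h hpar, numSubtrees_eq h hpar, Nat.cast_sum]
  have hN := hp.trans_le hle
  constructor
  · rw [div_le_div_iff₀ (by norm_num) hN]
    linarith
  · exact div_le_one_of_le₀ hle hN.le

/-- There is a rooted tree in which no vertex other than the root has exactly one child, whose root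
has `k` children and lies in `a` subtrees, while `b` subtrees avoid the root. -/
def Realizable (k a b : ℕ) : Prop :=
  ∃ (V : Type) (_ : Fintype V) (par : V → Option V) (v : V) (d : V → ℕ),
    IsParentMap par v d ∧ (∀ w, w ≠ v → #(children par w) ≠ 1) ∧ #(children par v) = k ∧
    rootedCount par v = a ∧ ∑ w, rootedCount par w = a + b

lemma realizable_singleton : Realizable 0 1 0 := by
  have h : IsParentMap (fun _ : Unit => none) () (fun _ => 0) := ⟨by simp, by simp⟩
  have hc : ∀ x, children (fun _ : Unit => none) x = ∅ := fun x => by ext; simp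
  have hcount : ∀ x, rootedCount (fun _ : Unit => none) x = 1 := fun x => by
    rw [rootedCount_eq_prod h, hc, prod_empty]
  exact ⟨Unit, inferInstance, _, (), _, h, by simp, by simp [hc], hcount _, by simp [hcount]⟩

/-- Attach a new root above the old one. -/
lemma Realizable.newRoot {k a b : ℕ} (hk : k ≠ 1) (h : Realizable k a b) :
    Realizable 1 (1 + a) (a + b) := by
  obtain ⟨V, _, par, v, d, h, hne, hv, ha, hb⟩ := h
  have h' : IsParentMap (Option.map par) none (fun x => x.elim 0 fun y => d y + 1) := by
    refine ⟨fun x => by simp, ?_⟩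
    rintro (_ | x) (_ | y) hxy
    · simp at hxy
    · simp at hxy
    · simp
    · simp only [Option.map_some, Option.some.injEq] at hxy
      simpa using h.lt hxy
  have hsome : ∀ x, children (Option.map par) (some x) =
      (children par x).map Function.Embedding.some := by
    intro x
    ext (_ | c) <;> simp
  have hnone : children (Option.map par) none = {some v} := by
    ext (_ | c)
    · simp
    · simp [h.eq_none_iff]
  have hcount : ∀ x, rootedCount (Option.map par) (some x) = rootedCount par x := fun x =>
    rootedCount_map h h' Function.Embedding.some (fun _ => True) (fun _ _ _ _ => trivial)
      (fun x _ => hsome x) x trivial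
  have hroot : rootedCount (Option.map par) none = 1 + a := by
    rw [rootedCount_eq_prod h', hnone, prod_singleton, hcount, ha]
  refine ⟨Option V, inferInstance, _, none, _, h', ?_, by rw [hnone, card_singleton], hroot, ?_⟩
  · rintro (_ | x) hx
    · exact absurd rfl hx
    · rw [hsome, card_map]
      by_cases hxv : x = v
      · rwa [hxv, hv]
      · exact hne x hxv
  · rw [Fintype.sum_option, hroot]
    simp_rw [hcount]
    rw [hb]

/-- Attach a new leaf to the root. -/
lemma Realizable.addLeaf {k a b : ℕ} (h : Realizable k a b) :
    Realizable (k + 1) (2 * a) (b + 1) := by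
  classical
  obtain ⟨V, _, par, v, d, h, hne, hv, ha, hb⟩ := h
  let par' : Option V → Option (Option V) := fun x => x.elim (some (some v)) fun y =>
    (par y).map some
  have h' : IsParentMap par' (some v) (fun x => x.elim (d v + 1) d) := by
    refine ⟨?_, ?_⟩
    · rintro (_ | x)
      · simp [par']
      · simp [par', h.eq_none_iff]
    · rintro (_ | x) y hxy
      · simp only [par', Option.elim_none, Option.some.injEq] at hxy
        simp [← hxy]
      · simp only [par', Option.elim_some, Option.map_eq_some_iff] at hxy
        obtain ⟨z, hz, rfl⟩ := hxy
        exact h.lt hz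
  have hsome : ∀ x, x ≠ v → children par' (some x) =
      (children par x).map Function.Embedding.some := by
    intro x hx
    ext (_ | c)
    · simp [par', hx.symm]
    · simp [par']
  have hroot : children par' (some v) =
      insert none ((children par v).map Function.Embedding.some) := by
    ext (_ | c)
    · simp [par']
    · simp [par']
  have hnone : children par' none = ∅ := by
    ext (_ | c) <;> simp [par']
  have hchild : ∀ x c, par c = some x → c ≠ v := by
    rintro x c hc rfl
    simp [(h.eq_none_iff c).2 rfl] at hc
  have hcount : ∀ x, x ≠ v → rootedCount par' (some x) = rootedCount par x :=
    rootedCount_map h h' Function.Embedding.some (fun x => x ≠ v) (fun x c _ hc => hchild x c hc)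
      hsome
  have hcount_none : rootedCount par' none = 1 := by
    rw [rootedCount_eq_prod h', hnone, prod_empty]
  have hcount_root : rootedCount par' (some v) = 2 * a := by
    rw [rootedCount_eq_prod h', hroot, prod_insert (by simp), hcount_none, prod_map, ← ha,
      rootedCount_eq_prod h v]
    congr 1
    exact prod_congr rfl fun c hc => by
      rw [Function.Embedding.some_apply, hcount c (hchild v c (mem_children.1 hc))]
  refine ⟨Option V, inferInstance, par', some v, _, h', ?_, ?_, hcount_root, ?_⟩
  · rintro (_ | x) hx
    · simp [hnone]
    · have hxv : x ≠ v := fun e => hx (e ▸ rfl)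
      rw [hsome x hxv, card_map]
      exact hne x hxv
  · rw [hroot, card_insert_of_notMem (by simp), card_map, hv]
  · rw [← add_sum_erase _ _ (mem_univ v), ha] at hb
    rw [Fintype.sum_option, ← add_sum_erase _ _ (mem_univ v), hcount_none, hcount_root,
      sum_congr rfl fun x hx => hcount x (ne_of_mem_erase hx), Nat.add_left_cancel hb]
    ring

lemma realizable_star (k : ℕ) : Realizable k (2 ^ k) k := by
  induction k with
  | zero => exact realizable_singleton
  | succ k ih =>
    rw [pow_succ, mul_comm]
    exact ih.addLeaf

lemma Realizable.exists_graph {k a b : ℕ} (hk : 3 ≤ k) (h : Realizable k a b) :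
    ∃ (n : ℕ) (G : SimpleGraph (Fin n)) (v : Fin n),
      G.IsTree ∧ SeriesReduced G ∧ 2 < n ∧ Nat.card (G.neighborSet v) ≠ 1 ∧
      (a / (a + b) : ℝ) = subtreeProb G v := by
  obtain ⟨V, _, par, v, d, h, hne, hv, ha, hb⟩ := h
  let e := Fintype.equivFin V
  let par' : Fin (Fintype.card V) → Option (Fin (Fintype.card V)) := fun i =>
    (par (e.symm i)).map e
  have h' : IsParentMap par' (e v) (fun i => d (e.symm i)) := by
    refine ⟨fun i => ?_, fun {i j} hij => ?_⟩
    · simp [par', h.eq_none_iff, Equiv.symm_apply_eq]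
    · obtain ⟨z, hz, rfl⟩ := Option.map_eq_some_iff.1 hij
      simpa using h.lt hz
  have hchildren : ∀ x, children par' (e x) = (children par x).map e.toEmbedding := by
    intro x
    ext i
    obtain ⟨c, rfl⟩ := e.surjective i
    simp [par']
  have hcount : ∀ x, rootedCount par' (e x) = rootedCount par x := fun x =>
    rootedCount_map h h' e.toEmbedding (fun _ => True) (fun _ _ _ _ => trivial)
      (fun x _ => hchildren x) x trivial
  have hG := h'.hasParentMap
  have hdeg : Nat.card ((parentGraph par').neighborSet (e v)) = k := by
    rw [card_neighborSet_root h' hG, hchildren, card_map, hv]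
  refine ⟨_, parentGraph par', e v, h'.isTree hG, fun i => ?_, ?_, by omega, ?_⟩
  · obtain ⟨x, rfl⟩ := e.surjective i
    by_cases hx : x = v
    · rw [hx]
      omega
    · rw [card_neighborSet_of_ne h' hG (e.injective.ne hx), hchildren, card_map]
      have := hne x hx
      omega
  · have := card_le_univ (children par v)
    omega
  · rw [subtreeProb, numSubtreesContaining_eq h' hG, numSubtrees_eq h' hG, ← e.sum_comp]
    simp_rw [hcount]
    rw [hb, ha]
    push_cast
    rfl

/-- `r` is a limit of ratios `b / a` over realizable triples `(k, a, b)` with `2 ≤ k`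
and `a → ∞`. -/
def IsLimitRatio (r : ℝ) : Prop :=
  ∃ k a b : ℕ → ℕ, (∀ i, 2 ≤ k i ∧ Realizable (k i) (a i) (b i)) ∧
    Tendsto (fun i => (a i : ℝ)) atTop atTop ∧
    Tendsto (fun i => (b i / a i : ℝ)) atTop (𝓝 r)

lemma isLimitRatio_zero : IsLimitRatio 0 := by
  refine ⟨fun i => i + 2, fun i => 2 ^ (i + 2), fun i => i + 2,
    fun i => ⟨Nat.le_add_left 2 i, realizable_star _⟩, ?_, ?_⟩
  · push_cast
    exact (tendsto_pow_atTop_atTop_of_one_lt (one_lt_two)).comp (tendsto_add_atTop_nat 2)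
  · have := (tendsto_pow_const_div_const_pow_of_one_lt 1 (one_lt_two (α := ℝ))).comp
      (tendsto_add_atTop_nat 2)
    simpa [Function.comp_def] using this

lemma tendsto_add_one_div_two_mul {a b : ℕ → ℕ} {r : ℝ}
    (ha : Tendsto (fun i => (a i : ℝ)) atTop atTop)
    (hr : Tendsto (fun i => (b i / a i : ℝ)) atTop (𝓝 r)) :
    Tendsto (fun i => (((b i + 1 : ℕ) : ℝ) / ((2 * a i : ℕ) : ℝ))) atTop (𝓝 (r / 2)) := by
  have := (hr.add ha.inv_tendsto_atTop).div_const 2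
  rw [add_zero] at this
  refine this.congr fun i => ?_
  simp only [Pi.inv_apply]
  push_cast
  rw [← one_div, ← add_div, div_div, mul_comm (2 : ℝ)]

lemma IsLimitRatio.half {r : ℝ} (h : IsLimitRatio r) : IsLimitRatio (r / 2) := by
  obtain ⟨k, a, b, h, ha, hr⟩ := h
  refine ⟨fun i => k i + 1, fun i => 2 * a i, fun i => b i + 1,
    fun i => ⟨by linarith [(h i).1], (h i).2.addLeaf⟩, ?_, tendsto_add_one_div_two_mul ha hr⟩
  push_cast
  exact ha.const_mul_atTop two_pos

lemma IsLimitRatio.one_add_half {r : ℝ} (h : IsLimitRatio r) : IsLimitRatio ((1 + r) / 2) := by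
  obtain ⟨k, a, b, h, ha, hr⟩ := h
  have ha' : Tendsto (fun i => ((1 + a i : ℕ) : ℝ)) atTop atTop := by
    push_cast
    exact tendsto_atTop_add_const_left _ _ ha
  have hr' : Tendsto (fun i => (((a i + b i : ℕ) : ℝ) / ((1 + a i : ℕ) : ℝ))) atTop
      (𝓝 (1 + r)) := by
    have hinv : Tendsto (fun i => ((a i : ℝ))⁻¹) atTop (𝓝 0) := ha.inv_tendsto_atTop
    have := (hr.const_add 1).div (hinv.add_const 1) (by norm_num)
    rw [zero_add, div_one] at this
    refine this.congr' ?_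
    filter_upwards [ha.eventually_gt_atTop 0] with i hi
    simp only [Pi.div_apply]
    push_cast
    field_simp
  refine ⟨fun _ => 2, fun i => 2 * (1 + a i), fun i => a i + b i + 1,
    fun i => ⟨le_rfl, ((h i).2.newRoot (by linarith [(h i).1])).addLeaf⟩, ?_,
    tendsto_add_one_div_two_mul ha' hr'⟩
  simp_rw [Nat.cast_mul]
  exact ha'.const_mul_atTop (by norm_num)

lemma exists_isLimitRatio_abs_sub_le (n : ℕ) :
    ∀ x ∈ Set.Icc (0 : ℝ) 1, ∃ r, IsLimitRatio r ∧ 0 ≤ r ∧ |r - x| ≤ (1 / 2) ^ n := by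
  induction n with
  | zero =>
    intro x hx
    refine ⟨0, isLimitRatio_zero, le_rfl, ?_⟩
    rw [abs_le]
    constructor <;> norm_num <;> linarith [hx.1, hx.2]
  | succ n ih =>
    rintro x ⟨h0, h1⟩
    rcases le_total x (1 / 2) with hx | hx
    · obtain ⟨r, hr, hr0, hrx⟩ := ih (2 * x) ⟨by linarith, by linarith⟩
      refine ⟨r / 2, hr.half, by linarith, ?_⟩
      rw [abs_le] at hrx ⊢
      rw [pow_succ]
      constructor <;> linarith [hrx.1, hrx.2]
    · obtain ⟨r, hr, hr0, hrx⟩ := ih (2 * x - 1) ⟨by linarith, by linarith⟩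
      refine ⟨(1 + r) / 2, hr.one_add_half, by linarith, ?_⟩
      rw [abs_le] at hrx ⊢
      rw [pow_succ]
      constructor <;> linarith [hrx.1, hrx.2]

lemma IsLimitRatio.exists_tendsto {r : ℝ} (h : IsLimitRatio r) (hr0 : 0 ≤ r) :
    ∃ k a b : ℕ → ℕ, (∀ i, 3 ≤ k i ∧ Realizable (k i) (a i) (b i)) ∧
      Tendsto (fun i => (a i / (a i + b i) : ℝ)) atTop (𝓝 (1 + r / 2)⁻¹) := by
  obtain ⟨k, a, b, h, ha, hr⟩ := h
  refine ⟨fun i => k i + 1, fun i => 2 * a i, fun i => b i + 1,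
    fun i => ⟨by linarith [(h i).1], (h i).2.addLeaf⟩, ?_⟩
  have := ((tendsto_add_one_div_two_mul ha hr).const_add 1).inv₀ (by positivity)
  refine this.congr' ?_
  filter_upwards [ha.eventually_gt_atTop 0] with i hi
  push_cast
  field_simp

theorem stmt14 :
    (∀ (n : ℕ) (G : SimpleGraph (Fin n)) (v : Fin n), G.IsTree → SeriesReduced G →
      2 < n → Nat.card (G.neighborSet v) ≠ 1 →
      subtreeProb G v ∈ Set.Icc (2 / 3 : ℝ) 1) ∧
    closure {x : ℝ | ∃ (n : ℕ) (G : SimpleGraph (Fin n)) (v : Fin n),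
      G.IsTree ∧ SeriesReduced G ∧ 2 < n ∧ Nat.card (G.neighborSet v) ≠ 1 ∧
      x = subtreeProb G v} = Set.Icc (2 / 3 : ℝ) 1 := by
  refine ⟨fun n G v hG hred hn hv => hG.subtreeProb_mem_Icc hred hn hv,
    Set.Subset.antisymm (closure_minimal ?_ isClosed_Icc) ?_⟩
  · rintro x ⟨n, G, v, hG, hred, hn, hv, rfl⟩
    exact hG.subtreeProb_mem_Icc hred hn hv
  · rintro y ⟨hy, hy1⟩
    have hy0 : 0 < y := by linarith
    have hx : 2 * (y⁻¹ - 1) ∈ Set.Icc (0 : ℝ) 1 := by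
      have h₁ : 1 ≤ y⁻¹ := (one_le_inv₀ hy0).2 hy1
      have h₂ : y⁻¹ ≤ (2 / 3)⁻¹ := inv_anti₀ (by norm_num) hy
      constructor <;> linarith
    choose r hr hr0 hrx using fun n => exists_isLimitRatio_abs_sub_le n _ hx
    have hlim : Tendsto r atTop (𝓝 (2 * (y⁻¹ - 1))) := by
      rw [tendsto_iff_norm_sub_tendsto_zero]
      exact squeeze_zero (fun _ => norm_nonneg _) hrx
        (tendsto_pow_atTop_nhds_zero_of_lt_one (by norm_num) (by norm_num))
    have hpos : 1 + 2 * (y⁻¹ - 1) / 2 ≠ 0 := by linarith [hx.1]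
    have hlim' := ((hlim.div_const 2).const_add 1).inv₀ hpos
    have hval : (1 + 2 * (y⁻¹ - 1) / 2)⁻¹ = y := by
      field_simp
      ring
    rw [hval] at hlim'
    rw [← closure_closure]
    refine mem_closure_of_tendsto hlim' (Eventually.of_forall fun n => ?_)
    obtain ⟨k, a, b, hreal, htend⟩ := (hr n).exists_tendsto (hr0 n)
    exact mem_closure_of_tendsto htend
      (Eventually.of_forall fun i => (hreal i).2.exists_graph (hreal i).1)
end

section
/- For every integer n ≥ 1, the number of subtrees of the comb C_n is N(C_n) = 2^{n+2} − n − 4. -/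
/-- The comb `C_n`: a path with `n` vertices (the `Sum.inl` vertices), with one pendant
leaf (the corresponding `Sum.inr` vertex) attached to each path vertex. -/
def comb (n : ℕ) : SimpleGraph (Fin n ⊕ Fin n) :=
  SimpleGraph.fromRel fun a b => match a, b with
    | Sum.inl i, Sum.inl j => (i : ℕ) + 1 = (j : ℕ)
    | Sum.inl i, Sum.inr j => i = j
    | _, _ => False

open Finset

theorem comb_adj_inl_inl {n : ℕ} {i j : Fin n} :
    (comb n).Adj (.inl i) (.inl j) ↔ (i : ℕ) + 1 = j ∨ (j : ℕ) + 1 = i := by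
  simp only [comb, SimpleGraph.fromRel_adj, ne_eq, Sum.inl.injEq, Fin.ext_iff]
  omega

theorem comb_adj_inl_inr {n : ℕ} {i j : Fin n} :
    (comb n).Adj (.inl i) (.inr j) ↔ i = j := by
  simp [comb, SimpleGraph.fromRel_adj]

theorem comb_adj_inr_inl {n : ℕ} {i j : Fin n} :
    (comb n).Adj (.inr i) (.inl j) ↔ i = j := by
  rw [SimpleGraph.adj_comm, comb_adj_inl_inr, eq_comm]

theorem not_comb_adj_inr_inr {n : ℕ} {i j : Fin n} :
    ¬ (comb n).Adj (.inr i) (.inr j) := by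
  simp [comb, SimpleGraph.fromRel_adj]

/-- A property that passes along the edges inside a connected vertex set holds on the whole set
as soon as it holds at one vertex. -/
theorem IsSubtree.propagate {V : Type*} {G : SimpleGraph V} {S : Finset V} (hS : IsSubtree G S)
    {P : V → Prop} (hP : ∀ u ∈ S, ∀ v ∈ S, G.Adj u v → P u → P v)
    {u v : V} (hu : u ∈ S) (hv : v ∈ S) (h : P u) : P v := by
  obtain ⟨w⟩ := hS.2.preconnected ⟨u, hu⟩ ⟨v, hv⟩
  have key : ∀ (x y : (S : Set V)), (G.induce (S : Set V)).Walk x y → P x → P y := by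
    intro x y w
    induction w with
    | nil => exact id
    | cons hadj _ ih => exact fun hx => ih (hP _ (Subtype.prop _) _ (Subtype.prop _) hadj hx)
  exact key _ _ w h

theorem isSubtree_singleton {V : Type*} (G : SimpleGraph V) (v : V) : IsSubtree G {v} := by
  refine ⟨singleton_nonempty v, ?_⟩
  rw [coe_singleton, SimpleGraph.connected_iff]
  exact ⟨SimpleGraph.Preconnected.of_subsingleton, inferInstance⟩

/-- An isolated tooth: a subtree containing a leaf but not its neighbour is a singleton. -/
theorem IsSubtree.eq_singleton_inr {n : ℕ} {S : Finset (Fin n ⊕ Fin n)}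
    (hS : IsSubtree (comb n) S) {i : Fin n} (hr : .inr i ∈ S) (hl : .inl i ∉ S) :
    S = {.inr i} := by
  refine eq_singleton_iff_unique_mem.2 ⟨hr, fun v hv => ?_⟩
  refine hS.propagate (P := fun v => v = .inr i) ?_ hr hv rfl
  rintro u - (j | j) hj hadj rfl
  · rw [comb_adj_inr_inl] at hadj
    exact absurd (hadj ▸ hj) hl
  · exact absurd hadj not_comb_adj_inr_inr

theorem IsSubtree.inl_mem_of_between {n : ℕ} {S : Finset (Fin n ⊕ Fin n)}
    (hS : IsSubtree (comb n) S) {a b c : Fin n}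
    (ha : .inl a ∈ S) (hb : .inl b ∈ S) (hac : a ≤ c) (hcb : c ≤ b) : .inl c ∈ S := by
  by_contra hc
  have hca : a ≠ c := fun h => hc (h ▸ ha)
  have hlt : Sum.elim id id (Sum.inl b : Fin n ⊕ Fin n) < c := by
    refine hS.propagate (P := fun v => Sum.elim id id v < c) ?_ ha hb (lt_of_le_of_ne hac hca)
    rintro (i | i) hi (j | j) hj hadj h
    · have hjc : j ≠ c := fun h => hc (h ▸ hj)
      rw [comb_adj_inl_inl] at hadj
      simp only [Sum.elim_inl, id, Fin.lt_def, ne_eq, Fin.ext_iff] at *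
      omega
    · rw [comb_adj_inl_inr] at hadj
      simpa [hadj] using h
    · rw [comb_adj_inr_inl] at hadj
      simpa [hadj] using h
    · exact absurd hadj not_comb_adj_inr_inr
  exact absurd hlt (not_lt.2 hcb)

theorem isSubtree_disjSum_Icc {n : ℕ} {a b : Fin n} (hab : a ≤ b) {B : Finset (Fin n)}
    (hB : B ⊆ Icc a b) : IsSubtree (comb n) ((Icc a b).disjSum B) := by
  have ha : Sum.inl a ∈ (Icc a b).disjSum B := inl_mem_disjSum.2 (left_mem_Icc.2 hab)
  have hspine : ∀ (k : ℕ) (c : Fin n) (hc : c ∈ Icc a b), (c : ℕ) = a + k →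
      ((comb n).induce (((Icc a b).disjSum B : Finset _) : Set (Fin n ⊕ Fin n))).Reachable
        ⟨.inl a, ha⟩ ⟨.inl c, inl_mem_disjSum.2 hc⟩ := by
    intro k
    induction k with
    | zero =>
      intro c hc hk
      obtain rfl : c = a := Fin.ext hk
      rfl
    | succ k ih =>
      intro c hc hk
      have hcb : (c : ℕ) ≤ b := (mem_Icc.1 hc).2
      have hd : (⟨a + k, by omega⟩ : Fin n) ∈ Icc a b := by
        simp only [mem_Icc, Fin.le_def]
        omega
      refine (ih _ hd rfl).trans (SimpleGraph.Adj.reachable ?_)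
      rw [SimpleGraph.comap_adj]
      exact comb_adj_inl_inl.2 (Or.inl hk.symm)
  have hroot : ∀ c (hc : c ∈ Icc a b),
      ((comb n).induce (((Icc a b).disjSum B : Finset _) : Set (Fin n ⊕ Fin n))).Reachable
        ⟨.inl a, ha⟩ ⟨.inl c, inl_mem_disjSum.2 hc⟩ := fun c hc =>
    hspine (c - a) c hc (Nat.add_sub_cancel' (mem_Icc.1 hc).1).symm
  refine ⟨⟨_, ha⟩, SimpleGraph.connected_iff_exists_forall_reachable _ |>.2 ⟨⟨_, ha⟩, ?_⟩⟩
  rintro ⟨c | c, hc⟩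
  · exact hroot c (inl_mem_disjSum.1 hc)
  · have hcB := hB (inr_mem_disjSum.1 hc)
    refine (hroot c hcB).trans (SimpleGraph.Adj.reachable ?_)
    rw [SimpleGraph.comap_adj]
    exact comb_adj_inl_inr.2 rfl

/-- The subtrees of the comb: single leaves, and spine intervals with any choice of their teeth. -/
theorem isSubtree_comb_iff {n : ℕ} {S : Finset (Fin n ⊕ Fin n)} :
    IsSubtree (comb n) S ↔ (∃ i, {.inr i} = S) ∨
      ∃ a b, a ≤ b ∧ ∃ B ⊆ Icc a b, (Icc a b).disjSum B = S := by
  constructor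
  · intro hS
    by_cases hteeth : ∀ i, .inr i ∈ S → .inl i ∈ S
    · right
      have hne : S.toLeft.Nonempty := by
        obtain ⟨i | i, hi⟩ := hS.1
        · exact ⟨i, mem_toLeft.2 hi⟩
        · exact ⟨i, mem_toLeft.2 (hteeth i hi)⟩
      have hIcc : Icc (S.toLeft.min' hne) (S.toLeft.max' hne) = S.toLeft := by
        ext c
        rw [mem_Icc]
        refine ⟨fun h => ?_, fun h => ⟨min'_le _ _ h, le_max' _ _ h⟩⟩
        exact mem_toLeft.2 (hS.inl_mem_of_between (mem_toLeft.1 (min'_mem _ hne))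
          (mem_toLeft.1 (max'_mem _ hne)) h.1 h.2)
      refine ⟨S.toLeft.min' hne, S.toLeft.max' hne, min'_le_max' _ hne, S.toRight, ?_, ?_⟩
      · rw [hIcc]
        exact fun i hi => mem_toLeft.2 (hteeth i (mem_toRight.1 hi))
      · rw [hIcc, toLeft_disjSum_toRight]
    · push Not at hteeth
      obtain ⟨i, hr, hl⟩ := hteeth
      exact Or.inl ⟨i, (hS.eq_singleton_inr hr hl).symm⟩
  · rintro (⟨i, rfl⟩ | ⟨a, b, hab, B, hB, rfl⟩)
    · exact isSubtree_singleton _ _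
    · exact isSubtree_disjSum_Icc hab hB

theorem sum_range_two_pow_sub (n : ℕ) :
    ∑ a ∈ range n, 2 ^ (n - a) + 2 = 2 ^ (n + 1) := by
  induction n with
  | zero => rfl
  | succ n ih =>
    rw [sum_range_succ']
    simp only [Nat.add_sub_add_right, Nat.sub_zero]
    rw [pow_succ 2 (n + 1)]
    omega

theorem sum_range_intervals_two_pow (n : ℕ) :
    ∑ b ∈ range n, ∑ a ∈ range (b + 1), 2 ^ (b + 1 - a) + 2 * n + 4 = 2 ^ (n + 2) := by
  induction n with
  | zero => rfl
  | succ n ih =>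
    have h := sum_range_two_pow_sub (n + 1)
    rw [sum_range_succ, show n + 1 + 2 = n + 2 + 1 from rfl, pow_succ 2 (n + 2)]
    rw [show n + 1 + 1 = n + 2 from rfl] at h
    omega

theorem sum_Icc_two_pow_card (n : ℕ) :
    ∑ p : Fin n × Fin n with p.1 ≤ p.2, 2 ^ #(Icc p.1 p.2) + 2 * n + 4 = 2 ^ (n + 2) := by
  rw [← sum_range_intervals_two_pow, ← univ_product_univ, sum_filter, sum_product_right,
    ← Fin.sum_univ_eq_sum_range (fun b => ∑ a ∈ range (b + 1), 2 ^ (b + 1 - a))]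
  congr 2
  refine sum_congr rfl fun b _ => ?_
  simp only [Fin.card_Icc, Fin.le_def]
  rw [Fin.sum_univ_eq_sum_range (fun a => if a ≤ (b : ℕ) then 2 ^ (b + 1 - a) else 0),
    ← sum_filter]
  refine sum_congr ?_ fun _ _ => rfl
  ext a
  simp only [mem_filter, mem_range]
  omega

theorem card_disjSum_Icc_image (n : ℕ) :
    #(((univ.filter fun p : Fin n × Fin n => p.1 ≤ p.2).sigma
        fun p => (Icc p.1 p.2).powerset).image fun x => (Icc x.1.1 x.1.2).disjSum x.2)
      + 2 * n + 4 = 2 ^ (n + 2) := by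
  rw [card_image_of_injOn, card_sigma]
  · simp only [card_powerset]
    exact sum_Icc_two_pow_card n
  · rintro ⟨⟨a, b⟩, B⟩ hx ⟨⟨a', b'⟩, B'⟩ hy h
    simp only [coe_sigma, Set.mem_sigma_iff, mem_coe, mem_filter, mem_univ, true_and] at hx hy
    have hl := congrArg toLeft h
    have hr := congrArg toRight h
    simp only [toLeft_disjSum, toRight_disjSum] at hl hr
    have h₁ := (Icc_subset_Icc_iff hx.1).1 hl.subset
    have h₂ := (Icc_subset_Icc_iff hy.1).1 hl.superset
    obtain rfl := le_antisymm h₁.1 h₂.1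
    obtain rfl := le_antisymm h₁.2 h₂.2
    rw [hr]

theorem stmt16 (n : ℕ) (hn : 1 ≤ n) :
    numSubtrees (comb n) = 2 ^ (n + 2) - n - 4 := by
  have hcard := card_disjSum_Icc_image n
  set T := ((univ.filter fun p : Fin n × Fin n => p.1 ≤ p.2).sigma
    fun p => (Icc p.1 p.2).powerset).image fun x => (Icc x.1.1 x.1.2).disjSum x.2 with hT
  set L : Finset (Finset (Fin n ⊕ Fin n)) := univ.image fun i : Fin n => {.inr i} with hL
  have hLcard : #L = n := by
    rw [hL, card_image_of_injective, card_univ, Fintype.card_fin]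
    exact fun i j h => Sum.inr_injective (singleton_injective h)
  have hdisj : Disjoint L T := by
    rw [Finset.disjoint_left]
    simp only [hL, hT, mem_image, mem_sigma, mem_filter, mem_univ, true_and, not_exists, not_and]
    rintro _ ⟨i, rfl⟩ ⟨⟨a, b⟩, B⟩ ⟨hab, -⟩ h
    have ha : Sum.inl a ∈ (Icc a b).disjSum B := inl_mem_disjSum.2 (left_mem_Icc.2 hab)
    simp [h] at ha
  have hmem : ∀ S, S ∈ L ∪ T ↔ IsSubtree (comb n) S := by
    intro S
    rw [isSubtree_comb_iff]
    simp only [hL, hT, mem_union, mem_image, mem_sigma, mem_filter, mem_univ, true_and,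
      mem_powerset, Sigma.exists, Prod.exists]
    grind
  have hnum : numSubtrees (comb n) = #(L ∪ T) := by
    rw [numSubtrees, ← Nat.card_eq_finsetCard]
    exact Nat.card_congr (Equiv.subtypeEquivRight fun S => (hmem S).symm)
  rw [hnum, card_union_of_disjoint hdisj, hLcard]
  omega
end
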